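/- arXiv:2103.07650 — 2 statements merged into one kernel-verified Lean document; each statement's English description precedes it below -/
import Mathlib

section
/- Let n ≥ 2 and p ∈ (2, ∞). Then there exists a constant C > 0 such that for every v ∈ C_c^∞(ℝⁿ), ‖ |x|^{(n−1)(1/2−1/p)} v ‖_{p,2} ≤ C ‖ |D|^{1/2−1/p} v ‖_{L²(ℝⁿ)}. -/
/-!
Put `s = 1/2 - 1/p` and let `R f r = r^{(d-1)/2} ‖f(r·)‖_{L²(S^{d-1})}` be the radial profile of
`f`. The weight and the polar density combine so that the left-hand side is the `L^p(dr)` norm of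
`R v`, while the `L²(dr)` norm of `R v` is `‖v‖₂`.

Integrating `∂_t ‖f(tω)‖²` outwards along rays, where `r^{d-1} ≤ t^{d-1}`, gives the trace
inequality `(R f r)² ≤ 2 ‖f‖₂ ‖∇f‖₂`, uniformly in `r`. For frequencies `|ξ| ≤ B`, Plancherel turns
it into `R f r ≲ B^{1/2} ‖f‖₂`. Summing over dyadic blocks, the part of `v` of frequency `≲ A` has
radial profile at most `K A^{1/2-s} ‖|D|^s v‖₂`; the geometric series converges because `s < 1/2`.

The `L^p` bound follows by real interpolation at the level of distribution functions. For each
`t > 0` choose `A` so that the low-frequency part of the profile is at most `t / 2`, that is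
`A^{1/p} = t / (2 K ‖|D|^s v‖₂)`. On `{R v > t}` the high-frequency part exceeds `t / 2`, so
Chebyshev and Plancherel bound the measure of this set by `4 t^{-2} ∫_{|ξ| ≥ A} |v̂|²`. By the layer
cake formula and Tonelli, `∫ (R v)^p dr ≲ ‖|D|^s v‖₂^{p-2} ∫ |ξ|^{2s} |v̂|² dξ = ‖|D|^s v‖₂^p`.
-/

open MeasureTheory Real ENNReal FourierTransform
open scoped ContDiff

noncomputable section

/-- Euclidean space ℝⁿ. -/
abbrev Spc (n : ℕ) := EuclideanSpace ℝ (Fin n)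

/-- Space-time ℝ × ℝⁿ. -/
abbrev STn (n : ℕ) := ℝ × Spc n

variable {n : ℕ}

/-- Directional derivative in the space-time direction `v`. -/
def dirD (v : STn n) (f : STn n → ℝ) : STn n → ℝ := fun p => fderiv ℝ f p v

/-- Time derivative ∂_t. -/
def dtD : (STn n → ℝ) → STn n → ℝ := dirD (1, 0)

/-- Spatial derivative ∂_j. -/
def dxD (j : Fin n) : (STn n → ℝ) → STn n → ℝ := dirD (0, EuclideanSpace.single j 1)

/-- Spatial Laplacian. -/
def lapD (f : STn n → ℝ) : STn n → ℝ := fun p => ∑ j, dxD j (dxD j f) p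

/-- d'Alembertian □ = ∂_t² − Δ. -/
def boxD (f : STn n → ℝ) : STn n → ℝ := fun p => dtD (dtD f) p - lapD f p

/-- Lorentz boost L_j = t ∂_j + x_j ∂_t. -/
def LD (j : Fin n) (f : STn n → ℝ) : STn n → ℝ := fun p => p.1 * dxD j f p + p.2 j * dtD f p

/-- Rotation Ω_{jk} = x_j ∂_k − x_k ∂_j. -/
def RotD (j k : Fin n) (f : STn n → ℝ) : STn n → ℝ := fun p => p.2 j * dxD k f p - p.2 k * dxD j f p

/-- Scaling S = t ∂_t + x·∇. -/
def SD (f : STn n → ℝ) : STn n → ℝ := fun p => p.1 * dtD f p + ∑ j, p.2 j * dxD j f p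

/-- Index type for the Klainerman vector fields. -/
def GIdx (n : ℕ) := Option (Fin n) ⊕ Fin n ⊕ (Fin n × Fin n) ⊕ Unit

instance : Fintype (GIdx n) := by unfold GIdx; infer_instance
instance : DecidableEq (GIdx n) := by unfold GIdx; infer_instance

/-- The Klainerman vector field with index `i`. -/
def Gop : GIdx n → (STn n → ℝ) → STn n → ℝ
  | Sum.inl none => dtD
  | Sum.inl (some j) => dxD j
  | Sum.inr (Sum.inl j) => LD j
  | Sum.inr (Sum.inr (Sum.inl jk)) => RotD jk.1 jk.2
  | Sum.inr (Sum.inr (Sum.inr _)) => SD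

/-- Iterated composition Γ^α along a word of indices. -/
def GwL : List (GIdx n) → (STn n → ℝ) → STn n → ℝ
  | [], f => f
  | a :: l, f => Gop a (GwL l f)

/-- Sum of a quantity over all products of at most `N` Klainerman vector fields. -/
def SumW (N : ℕ) (Φ : (STn n → ℝ) → ℝ≥0∞) (f : STn n → ℝ) : ℝ≥0∞ :=
  ∑ m ∈ Finset.range (N + 1), ∑ w : Fin m → GIdx n, Φ (GwL (List.ofFn w) f)

/-- Pointwise norm of the full space-time gradient ∂u = (∂_t u, ∇_x u). -/
def gradN (f : STn n → ℝ) (p : STn n) : ℝ := Real.sqrt ((dtD f p) ^ 2 + ∑ j, (dxD j f p) ^ 2)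

/-- Fourier transform (in space) of a real valued function. -/
def fourierS (g : Spc n → ℝ) : Spc n → ℂ := 𝓕 (fun x => (g x : ℂ))

/-- ‖ |D|^s g ‖_{L²}, i.e. the L² norm of ξ ↦ |ξ|^s (ℱ g)(ξ). -/
def DsN (s : ℝ) (g : Spc n → ℝ) : ℝ≥0∞ :=
  eLpNorm (fun ξ : Spc n => ‖ξ‖ ^ s * ‖fourierS g ξ‖) 2 volume

/-- The surface measure on the unit sphere of ℝⁿ. -/
def sphM (n : ℕ) : Measure (Metric.sphere (0 : Spc n) 1) := (volume : Measure (Spc n)).toSphere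

/-- The L^q norm of g(r ω) over the unit sphere. -/
def sphN (n : ℕ) (q : ℝ) (g : Spc n → ℝ) (r : ℝ) : ℝ≥0∞ :=
  (∫⁻ o, (‖g (r • (o : Spc n))‖₊ : ℝ≥0∞) ^ q ∂(sphM n)) ^ (1 / q)

/-- The mixed norm ‖g‖_{p,q} = (∫_0^∞ ‖g(r·)‖_{L^q(S^{n-1})}^p r^{n-1} dr)^{1/p}. -/
def mixN (n : ℕ) (p q : ℝ) (g : Spc n → ℝ) : ℝ≥0∞ :=
  (∫⁻ r in Set.Ioi (0 : ℝ), (sphN n q g r) ^ p * ENNReal.ofReal (r ^ (n - 1))) ^ (1 / p)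

/-- A space-time function which is Schwartz in the space variable for each fixed time. -/
def SchwartzInX (v : STn n → ℝ) : Prop :=
  ∀ t : ℝ, ∃ φ : SchwartzMap (Spc n) ℝ, ∀ x, v (t, x) = φ x

/-- The space-time partial derivatives ∂_0 = ∂_t, ∂_j (j = 1,2,3) on ℝ × ℝ³. -/
def pd4 (α : Fin 4) : (STn 3 → ℝ) → STn 3 → ℝ := Fin.cases dtD (fun j => dxD j) α

/-- The null condition for a set of coefficients {A^{αβ}}. -/
def NullCond (A : Fin 4 → Fin 4 → ℝ) : Prop :=
  ∀ X : Fin 4 → ℝ, (X 0) ^ 2 = (X 1) ^ 2 + (X 2) ^ 2 + (X 3) ^ 2 →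
    ∑ α, ∑ β, A α β * X α * X β = 0

/-- The null form A^{αβ} (∂_α v)(∂_β w). -/
def QF (A : Fin 4 → Fin 4 → ℝ) (v w : STn 3 → ℝ) (p : STn 3) : ℝ :=
  ∑ α, ∑ β, A α β * pd4 α v p * pd4 β w p

/-- The good derivative T_j = ∂_j + (x_j/|x|) ∂_t. -/
def TD (j : Fin 3) (f : STn 3 → ℝ) (p : STn 3) : ℝ := dxD j f p + (p.2 j / ‖p.2‖) * dtD f p

end

section PolarCoordinates

open Metric Set Module

theorem lintegral_eq_lintegral_toSphere_lintegral_Ioi {E : Type*} [NormedAddCommGroup E]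
    [NormedSpace ℝ E] [FiniteDimensional ℝ E] [Nontrivial E] [MeasurableSpace E] [BorelSpace E]
    (μ : Measure E) [μ.IsAddHaarMeasure] {f : E → ℝ≥0∞} (hf : Measurable f) :
    ∫⁻ x, f x ∂μ = ∫⁻ o, (∫⁻ r in Ioi (0 : ℝ),
      ENNReal.ofReal (r ^ (finrank ℝ E - 1)) * f (r • (o : E))) ∂μ.toSphere := by
  have hpolar := μ.measurePreserving_homeomorphUnitSphereProd.lintegral_comp_emb
    (Homeomorph.measurableEmbedding _)
    (fun z => f (((homeomorphUnitSphereProd E).symm z : ({0}ᶜ : Set E)) : E))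
  simp only [Homeomorph.symm_apply_apply, homeomorphUnitSphereProd_symm_apply_coe] at hpolar
  calc ∫⁻ x, f x ∂μ = ∫⁻ x : ({0}ᶜ : Set E), f x ∂(μ.comap Subtype.val) := by
        rw [lintegral_subtype_comap (measurableSet_singleton _).compl, restrict_compl_singleton]
    _ = ∫⁻ z, f ((z.2 : ℝ) • (z.1 : E))
          ∂(μ.toSphere.prod (Measure.volumeIoiPow (finrank ℝ E - 1))) := hpolar
    _ = ∫⁻ o, (∫⁻ r, f ((r : ℝ) • (o : E))
          ∂(Measure.volumeIoiPow (finrank ℝ E - 1))) ∂μ.toSphere :=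
        lintegral_prod _ (by fun_prop)
    _ = _ := by
        refine lintegral_congr fun o => ?_
        rw [Measure.volumeIoiPow,
          lintegral_withDensity_eq_lintegral_mul _ (by fun_prop) (by fun_prop)]
        exact lintegral_subtype_comap measurableSet_Ioi
          (fun r : ℝ => ENNReal.ofReal (r ^ (finrank ℝ E - 1)) * f (r • (o : E)))

theorem eLpNorm_two_sq {α F : Type*} [MeasurableSpace α] [NormedAddCommGroup F] (μ : Measure α)
    (f : α → F) :
    eLpNorm f 2 μ ^ 2 = ∫⁻ x, ‖f x‖ₑ ^ 2 ∂μ := by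
  simpa using eLpNorm_nnreal_pow_eq_lintegral (μ := μ) (p := 2) (f := f) two_ne_zero

variable {E F : Type*} [NormedAddCommGroup E] [InnerProductSpace ℝ E] [FiniteDimensional ℝ E]
  [MeasurableSpace E] [BorelSpace E] [NormedAddCommGroup F]

/-- The mixed norm `‖f‖_{p,q}`, that is `L^p(r^{d-1} dr)` of the `L^q` norms over spheres, for
functions on a Euclidean space of dimension `d`. -/
noncomputable def mixedNorm (p : ℝ) (q : ℝ≥0∞) (f : E → F) : ℝ≥0∞ :=
  (∫⁻ r in Ioi (0 : ℝ),
    eLpNorm (fun o : sphere (0 : E) 1 => f (r • (o : E))) q (volume : Measure E).toSphere ^ p *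
      ENNReal.ofReal (r ^ (finrank ℝ E - 1))) ^ (1 / p)

/-- The radial profile `r^{(d-1)/2} ‖f(r·)‖_{L²(S^{d-1})}`. The weight is the square root of the
polar density, so the `L²(dr)` norm of the profile is the `L²` norm of `f`. -/
noncomputable def radialProfile (f : E → F) (r : ℝ) : ℝ≥0∞ :=
  ENNReal.ofReal (r ^ (((finrank ℝ E : ℝ) - 1) / 2)) *
    eLpNorm (fun o : sphere (0 : E) 1 => f (r • (o : E))) 2 (volume : Measure E).toSphere

theorem mixedNorm_congr_norm {G : Type*} [NormedAddCommGroup G] {f : E → F} {g : E → G}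
    (hfg : ∀ x, ‖f x‖ = ‖g x‖) (p : ℝ) (q : ℝ≥0∞) : mixedNorm p q f = mixedNorm p q g := by
  have hsphere (r : ℝ) := eLpNorm_congr_norm_ae (p := q) (μ := (volume : Measure E).toSphere)
    (.of_forall fun o : sphere (0 : E) 1 => hfg (r • (o : E)))
  simp only [mixedNorm, hsphere]

theorem radialProfile_sq [Nontrivial E] (f : E → F) {r : ℝ} (hr : 0 < r) :
    radialProfile f r ^ 2 = ∫⁻ o, ENNReal.ofReal (r ^ (finrank ℝ E - 1)) *
      ‖f (r • (o : E))‖ₑ ^ 2 ∂(volume : Measure E).toSphere := by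
  rw [radialProfile, mul_pow, lintegral_const_mul' _ _ ENNReal.ofReal_ne_top, eLpNorm_two_sq,
    ← ENNReal.ofReal_pow (by positivity), ← Real.rpow_mul_natCast hr.le, ← Real.rpow_natCast r,
    Nat.cast_pred finrank_pos, Nat.cast_two, div_mul_cancel₀ _ two_ne_zero]

theorem lintegral_radialProfile_sq [Nontrivial E] {f : E → F} (hf : Continuous f) :
    ∫⁻ r in Ioi (0 : ℝ), radialProfile f r ^ 2 = eLpNorm f 2 volume ^ 2 := by
  have hf_enorm : Measurable fun x => ‖f x‖ₑ := hf.enorm.measurable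
  rw [eLpNorm_two_sq, lintegral_eq_lintegral_toSphere_lintegral_Ioi volume (by fun_prop),
    lintegral_lintegral_swap (by simp only [Function.uncurry_def]; fun_prop)]
  exact setLIntegral_congr_fun measurableSet_Ioi fun r hr => radialProfile_sq f hr

theorem measurable_radialProfile {f : E → F} (hf : Continuous f) :
    Measurable (radialProfile f) := by
  have hf_enorm : Measurable fun x => ‖f x‖ₑ := hf.enorm.measurable
  unfold radialProfile
  simp_rw [eLpNorm_eq_lintegral_rpow_enorm_toReal two_ne_zero ofNat_ne_top]
  refine Measurable.mul (by fun_prop) (Measurable.pow_const ?_ _)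
  exact Measurable.lintegral_prod_right'
    (f := fun z : ℝ × sphere (0 : E) 1 => ‖f (z.1 • (z.2 : E))‖ₑ ^ (2 : ℝ≥0∞).toReal)
    ((hf_enorm.comp (by fun_prop)).pow_const _)

theorem radialProfile_ne_top {f : E → F} (hf : Continuous f) (r : ℝ) :
    radialProfile f r ≠ ⊤ := by
  have hsphere : Continuous fun o : sphere (0 : E) 1 => f (r • (o : E)) := by fun_prop
  exact ENNReal.mul_ne_top ENNReal.ofReal_ne_top
    (hsphere.memLp_of_hasCompactSupport (.of_compactSpace _)).eLpNorm_ne_top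

theorem radialProfile_le_sub_add {f g : E → F} (hf : Continuous f) (hg : Continuous g) (r : ℝ) :
    radialProfile f r ≤ radialProfile (f - g) r + radialProfile g r := by
  unfold radialProfile
  rw [← mul_add]
  gcongr
  have hsub := eLpNorm_add_le (p := 2) (μ := (volume : Measure E).toSphere)
    (f := fun o : sphere (0 : E) 1 => (f - g) (r • (o : E)))
    (g := fun o : sphere (0 : E) 1 => g (r • (o : E)))
    (Continuous.aestronglyMeasurable (by fun_prop)) (Continuous.aestronglyMeasurable (by fun_prop))
    one_le_two
  simpa [Pi.add_def] using hsub

theorem mixedNorm_two_weight_smul [Nontrivial E] [NormedSpace ℝ F] {p : ℝ} (hp : 0 < p)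
    (f : E → F) :
    mixedNorm p 2 (fun x => ‖x‖ ^ (((finrank ℝ E : ℝ) - 1) * (1 / 2 - 1 / p)) • f x) =
      (∫⁻ r in Ioi (0 : ℝ), radialProfile f r ^ p) ^ (1 / p) := by
  set w : ℝ := ((finrank ℝ E : ℝ) - 1) * (1 / 2 - 1 / p)
  have hweight : w * p + ((finrank ℝ E : ℝ) - 1) = ((finrank ℝ E : ℝ) - 1) / 2 * p := by
    simp only [w]
    field_simp
    ring
  unfold mixedNorm radialProfile
  congr 1
  refine setLIntegral_congr_fun measurableSet_Ioi fun r (hr : 0 < r) => ?_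
  have hsphere (o : sphere (0 : E) 1) : ‖r • (o : E)‖ = r := by
    rw [norm_smul, norm_eq_of_mem_sphere, mul_one, Real.norm_of_nonneg hr.le]
  have hsmul := eLpNorm_const_smul (r ^ w) (fun o : sphere (0 : E) 1 => f (r • (o : E))) 2
    (volume : Measure E).toSphere
  simp only [Pi.smul_def, Real.enorm_of_nonneg (Real.rpow_nonneg hr.le w)] at hsmul
  simp only [hsphere, hsmul]
  rw [ENNReal.mul_rpow_of_nonneg _ _ hp.le, ENNReal.mul_rpow_of_nonneg _ _ hp.le, mul_right_comm,
    ENNReal.ofReal_rpow_of_nonneg (by positivity) hp.le,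
    ENNReal.ofReal_rpow_of_nonneg (by positivity) hp.le, ← ENNReal.ofReal_mul (by positivity),
    ← Real.rpow_natCast r, Nat.cast_pred finrank_pos, ← Real.rpow_mul hr.le, ← Real.rpow_mul hr.le,
    ← Real.rpow_add hr, hweight]

end PolarCoordinates

section Trace

open Metric Set Module Filter Topology

theorem enorm_le_lintegral_Ioi_of_hasDerivAt_of_tendsto_zero {F : Type*} [NormedAddCommGroup F]
    [NormedSpace ℝ F] [CompleteSpace F] {g g' : ℝ → F} {r : ℝ}
    (hg : ∀ t ∈ Ici r, HasDerivAt g (g' t) t) (hlim : Tendsto g atTop (𝓝 0)) :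
    ‖g r‖ₑ ≤ ∫⁻ t in Ioi r, ‖g' t‖ₑ := by
  rcases eq_or_ne (∫⁻ t in Ioi r, ‖g' t‖ₑ) ⊤ with htop | hfin
  · simp only [htop, le_top]
  have hderiv : EqOn (deriv g) g' (Ioi r) := fun t ht => (hg t (Ioi_subset_Ici_self ht)).deriv
  have hint : IntegrableOn g' (Ioi r) :=
    ⟨(aestronglyMeasurable_deriv g _).congr
      ((ae_restrict_iff' measurableSet_Ioi).2 (.of_forall hderiv)), hfin.lt_top⟩
  have hftc := integral_Ioi_of_hasDerivAt_of_tendsto' hg hint hlim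
  rw [← enorm_neg, ← zero_sub, ← hftc]
  exact enorm_integral_le_lintegral_enorm g'

theorem enorm_sq_le_lintegral_Ioi_of_hasDerivAt_of_tendsto_zero {F : Type*}
    [NormedAddCommGroup F] [InnerProductSpace ℝ F] {g g' : ℝ → F} {r : ℝ}
    (hg : ∀ t ∈ Ici r, HasDerivAt g (g' t) t) (hlim : Tendsto g atTop (𝓝 0)) :
    ‖g r‖ₑ ^ 2 ≤ ∫⁻ t in Ioi r, 2 * (‖g t‖ₑ * ‖g' t‖ₑ) := by
  have hsq_lim : Tendsto (fun t => ‖g t‖ ^ 2) atTop (𝓝 0) := by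
    simpa using hlim.norm.pow 2
  calc ‖g r‖ₑ ^ 2 = ‖‖g r‖ ^ 2‖ₑ := by rw [enorm_pow, enorm_norm]
    _ ≤ ∫⁻ t in Ioi r, ‖2 * inner ℝ (g t) (g' t)‖ₑ :=
        enorm_le_lintegral_Ioi_of_hasDerivAt_of_tendsto_zero
          (fun t ht => (hg t ht).norm_sq) hsq_lim
    _ ≤ ∫⁻ t in Ioi r, 2 * (‖g t‖ₑ * ‖g' t‖ₑ) := by
        gcongr with t
        rw [enorm_mul, Real.enorm_of_nonneg zero_le_two, ENNReal.ofReal_ofNat]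
        gcongr
        exact (ENNReal.coe_le_coe.2 (nnnorm_inner_le_nnnorm _ _)).trans_eq (ENNReal.coe_mul _ _)

theorem lintegral_enorm_mul_enorm_le_eLpNorm_two {α F G : Type*} [MeasurableSpace α]
    [NormedAddCommGroup F] [NormedAddCommGroup G] {μ : Measure α} {f : α → F} {g : α → G}
    (hf : AEStronglyMeasurable f μ) (hg : AEStronglyMeasurable g μ) :
    ∫⁻ x, ‖f x‖ₑ * ‖g x‖ₑ ∂μ ≤ eLpNorm f 2 μ * eLpNorm g 2 μ := by
  simpa [eLpNorm_eq_lintegral_rpow_enorm_toReal] using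
    ENNReal.lintegral_mul_le_Lp_mul_Lq μ Real.HolderConjugate.two_two hf.enorm hg.enorm

variable {E F : Type*} [NormedAddCommGroup F] [InnerProductSpace ℝ F]

theorem ofReal_pow_mul_enorm_sq_le_lintegral_ray [NormedAddCommGroup E] [NormedSpace ℝ E]
    {f : E → F} (hf : Differentiable ℝ f) (hlim : Tendsto f (Bornology.cobounded E) (𝓝 0))
    (o : sphere (0 : E) 1) {r : ℝ} (hr : 0 < r) (k : ℕ) :
    ENNReal.ofReal (r ^ k) * ‖f (r • (o : E))‖ₑ ^ 2 ≤
      ∫⁻ t in Ioi (0 : ℝ), ENNReal.ofReal (t ^ k) *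
        (2 * (‖f (t • (o : E))‖ₑ * ‖fderiv ℝ f (t • (o : E))‖ₑ)) := by
  have hray (t : ℝ) : HasDerivAt (fun t : ℝ => f (t • (o : E))) (fderiv ℝ f (t • (o : E)) o) t := by
    have hsmul : HasDerivAt (fun t : ℝ => t • (o : E)) (o : E) t := by
      simpa using (hasDerivAt_id t).smul_const (o : E)
    exact (hf _).hasFDerivAt.comp_hasDerivAt t hsmul
  have hray_lim : Tendsto (fun t : ℝ => f (t • (o : E))) atTop (𝓝 0) := by
    refine hlim.comp ?_
    rw [← tendsto_norm_atTop_iff_cobounded]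
    simpa only [norm_smul, norm_eq_of_mem_sphere, mul_one] using tendsto_norm_atTop_atTop
  have hradial (t : ℝ) : ‖fderiv ℝ f (t • (o : E)) o‖ₑ ≤ ‖fderiv ℝ f (t • (o : E))‖ₑ :=
    enorm_le_iff_norm_le.2 <|
      (fderiv ℝ f (t • (o : E))).unit_le_opNorm o (norm_eq_of_mem_sphere o).le
  calc ENNReal.ofReal (r ^ k) * ‖f (r • (o : E))‖ₑ ^ 2
      ≤ ENNReal.ofReal (r ^ k) * ∫⁻ t in Ioi r,
          2 * (‖f (t • (o : E))‖ₑ * ‖fderiv ℝ f (t • (o : E)) o‖ₑ) := by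
        gcongr
        exact enorm_sq_le_lintegral_Ioi_of_hasDerivAt_of_tendsto_zero (fun t _ => hray t) hray_lim
    _ = ∫⁻ t in Ioi r, ENNReal.ofReal (r ^ k) *
          (2 * (‖f (t • (o : E))‖ₑ * ‖fderiv ℝ f (t • (o : E)) o‖ₑ)) :=
        (lintegral_const_mul' _ _ ENNReal.ofReal_ne_top).symm
    _ ≤ ∫⁻ t in Ioi r, ENNReal.ofReal (t ^ k) *
          (2 * (‖f (t • (o : E))‖ₑ * ‖fderiv ℝ f (t • (o : E))‖ₑ)) := by
        refine setLIntegral_mono' measurableSet_Ioi fun t (ht : r < t) => ?_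
        gcongr
        exact hradial t
    _ ≤ _ := lintegral_mono_set (Ioi_subset_Ioi hr.le)

variable [NormedAddCommGroup E] [InnerProductSpace ℝ E] [FiniteDimensional ℝ E]
  [MeasurableSpace E] [BorelSpace E] [Nontrivial E]

theorem radialProfile_sq_le {f : E → F} (hf : ContDiff ℝ 1 f)
    (hlim : Tendsto f (Bornology.cobounded E) (𝓝 0)) {r : ℝ} (hr : 0 < r) :
    radialProfile f r ^ 2 ≤ 2 * (eLpNorm f 2 volume * eLpNorm (fderiv ℝ f) 2 volume) := by
  have hf_cont := hf.continuous
  have hdf_cont := hf.continuous_fderiv one_ne_zero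
  have hf_meas : Measurable fun x => ‖f x‖ₑ := hf_cont.enorm.measurable
  calc radialProfile f r ^ 2
      = ∫⁻ o, ENNReal.ofReal (r ^ (finrank ℝ E - 1)) * ‖f (r • (o : E))‖ₑ ^ 2
          ∂(volume : Measure E).toSphere := radialProfile_sq f hr
    _ ≤ ∫⁻ o, (∫⁻ t in Ioi (0 : ℝ), ENNReal.ofReal (t ^ (finrank ℝ E - 1)) *
          (2 * (‖f (t • (o : E))‖ₑ * ‖fderiv ℝ f (t • (o : E))‖ₑ)))
          ∂(volume : Measure E).toSphere :=
        lintegral_mono fun o => ofReal_pow_mul_enorm_sq_le_lintegral_ray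
          (hf.differentiable one_ne_zero) hlim o hr _
    _ = ∫⁻ x, 2 * (‖f x‖ₑ * ‖fderiv ℝ f x‖ₑ) :=
        (lintegral_eq_lintegral_toSphere_lintegral_Ioi volume
          (f := fun x => 2 * (‖f x‖ₑ * ‖fderiv ℝ f x‖ₑ)) (by fun_prop)).symm
    _ = 2 * ∫⁻ x, ‖f x‖ₑ * ‖fderiv ℝ f x‖ₑ := lintegral_const_mul' _ _ ofNat_ne_top
    _ ≤ _ := by
        gcongr
        exact lintegral_enorm_mul_enorm_le_eLpNorm_two hf_cont.aestronglyMeasurable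
          hdf_cont.aestronglyMeasurable

end Trace

section Bernstein

open Module SchwartzMap LineDeriv

theorem sq_opNorm_le_sum_sq_norm_orthonormalBasis {𝕜 ι E F : Type*} [RCLike 𝕜] [Fintype ι]
    [NormedAddCommGroup E] [InnerProductSpace 𝕜 E] [NormedAddCommGroup F] [NormedSpace 𝕜 F]
    (L : E →L[𝕜] F) (b : OrthonormalBasis ι 𝕜 E) : ‖L‖ ^ 2 ≤ ∑ i, ‖L (b i)‖ ^ 2 := by
  refine (Real.le_sqrt (norm_nonneg L) (by positivity)).1 <|
    L.opNorm_le_bound (Real.sqrt_nonneg _) fun x => ?_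
  calc ‖L x‖ = ‖∑ i, inner 𝕜 (b i) x • L (b i)‖ := by
        conv_lhs => rw [← b.sum_repr' x, map_sum]
        simp only [map_smul]
    _ ≤ ∑ i, ‖L (b i)‖ * ‖inner 𝕜 (b i) x‖ :=
        norm_sum_le_of_le _ fun i _ => by rw [norm_smul, mul_comm]
    _ ≤ √(∑ i, ‖L (b i)‖ ^ 2) * √(∑ i, ‖inner 𝕜 (b i) x‖ ^ 2) :=
        Real.sum_mul_le_sqrt_mul_sqrt _ _ _
    _ = √(∑ i, ‖L (b i)‖ ^ 2) * ‖x‖ := by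
        rw [b.sum_sq_norm_inner_right, Real.sqrt_sq (norm_nonneg x)]

variable {E F : Type*} [NormedAddCommGroup E] [InnerProductSpace ℝ E] [FiniteDimensional ℝ E]
  [MeasurableSpace E] [BorelSpace E] [NormedAddCommGroup F] [InnerProductSpace ℂ F]

theorem enorm_fourier_lineDerivOp (f : 𝓢(E, F)) (m ξ : E) :
    ‖𝓕 (∂_{m} f) ξ‖ₑ = ‖2 * π * inner ℝ ξ m‖ₑ * ‖𝓕 f ξ‖ₑ := by
  rw [fourier_lineDerivOp_eq, smul_apply, smulLeftCLM_apply_apply (by fun_prop), enorm_smul,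
    enorm_smul, ← mul_assoc, enorm_mul (2 * π)]
  congr 2
  rw [← enorm_norm, norm_mul, Complex.norm_I, mul_one]
  norm_cast
  rw [enorm_norm]

variable [CompleteSpace F]

theorem eLpNorm_two_fourier (f : 𝓢(E, F)) :
    eLpNorm (𝓕 f : 𝓢(E, F)) 2 volume = eLpNorm f 2 volume := by
  have hplancherel := norm_fourier_toL2_eq f
  rw [norm_toLp, norm_toLp] at hplancherel
  exact (ENNReal.toReal_eq_toReal_iff' (eLpNorm_lt_top _ _ _).ne (eLpNorm_lt_top _ _ _).ne).1
    hplancherel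

theorem eLpNorm_fderiv_le (f : 𝓢(E, F)) :
    eLpNorm (fderiv ℝ f) 2 volume ≤ eLpNorm (fun ξ => (2 * π * ‖ξ‖) • 𝓕 f ξ) 2 volume := by
  let b := stdOrthonormalBasis ℝ E
  have hcoord (ξ : E) : ∑ i, ‖2 * π * inner ℝ ξ (b i)‖ₑ ^ 2 = ‖2 * π * ‖ξ‖‖ₑ ^ 2 := by
    simp only [enorm_mul _ (inner ℝ ξ _), enorm_mul _ ‖ξ‖, mul_pow, ← Finset.mul_sum]
    congr 1
    simp only [← ofReal_norm, ← ENNReal.ofReal_pow (norm_nonneg _), norm_norm,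
      ← b.sum_sq_norm_inner_left ξ]
    exact (ENNReal.ofReal_sum_of_nonneg fun _ _ => sq_nonneg _).symm
  rw [← ENNReal.pow_le_pow_left_iff two_ne_zero, eLpNorm_two_sq, eLpNorm_two_sq]
  calc ∫⁻ x, ‖fderiv ℝ f x‖ₑ ^ 2 ≤ ∫⁻ x, ∑ i, ‖∂_{b i} f x‖ₑ ^ 2 := by
        gcongr with x
        simp only [lineDerivOp_apply_eq_fderiv, ← ofReal_norm,
          ← ENNReal.ofReal_pow (norm_nonneg _)]
        rw [← ENNReal.ofReal_sum_of_nonneg fun _ _ => sq_nonneg _]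
        exact ENNReal.ofReal_le_ofReal (sq_opNorm_le_sum_sq_norm_orthonormalBasis _ b)
    _ = ∑ i, ∫⁻ ξ, ‖𝓕 (∂_{b i} f) ξ‖ₑ ^ 2 := by
        rw [lintegral_finsetSum _ fun i _ =>
          (SchwartzMap.continuous _).enorm.measurable.pow_const 2]
        simp only [← eLpNorm_two_sq, eLpNorm_two_fourier]
    _ = ∫⁻ ξ, ∑ i, ‖𝓕 (∂_{b i} f) ξ‖ₑ ^ 2 :=
        (lintegral_finsetSum _ fun i _ =>
          (SchwartzMap.continuous _).enorm.measurable.pow_const 2).symm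
    _ = ∫⁻ ξ, ‖(2 * π * ‖ξ‖) • 𝓕 f ξ‖ₑ ^ 2 := by
        simp only [enorm_fourier_lineDerivOp, enorm_smul, mul_pow, ← Finset.sum_mul, hcoord]

theorem eLpNorm_fderiv_le_of_fourier_eq_zero {f : 𝓢(E, F)} {B : ℝ}
    (hf : ∀ ξ, B < ‖ξ‖ → 𝓕 f ξ = 0) :
    eLpNorm (fderiv ℝ f) 2 volume ≤ ENNReal.ofReal (2 * π * B) * eLpNorm f 2 volume := by
  rw [← eLpNorm_two_fourier f]
  refine (eLpNorm_fderiv_le f).trans <|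
    eLpNorm_le_mul_eLpNorm_of_ae_le_mul (.of_forall fun ξ => ?_) 2
  rcases lt_or_ge B ‖ξ‖ with hξ | hξ
  · simp [hf ξ hξ]
  · rw [norm_smul, Real.norm_of_nonneg (by positivity)]
    gcongr

theorem radialProfile_le_of_fourier_eq_zero [Nontrivial E] {f : 𝓢(E, F)} {B : ℝ} (hB : 0 ≤ B)
    (hf : ∀ ξ, B < ‖ξ‖ → 𝓕 f ξ = 0) {r : ℝ} (hr : 0 < r) :
    radialProfile f r ≤ ENNReal.ofReal √(4 * π * B) * eLpNorm f 2 volume := by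
  let : InnerProductSpace ℝ F := InnerProductSpace.complexToReal
  rw [← ENNReal.pow_le_pow_left_iff two_ne_zero]
  calc radialProfile f r ^ 2
      ≤ 2 * (eLpNorm f 2 volume * eLpNorm (fderiv ℝ f) 2 volume) :=
        radialProfile_sq_le (f.smooth 1)
          (Metric.cobounded_eq_cocompact (α := E) ▸ f.tendsto_cocompact) hr
    _ ≤ 2 * (eLpNorm f 2 volume * (ENNReal.ofReal (2 * π * B) * eLpNorm f 2 volume)) := by
        gcongr
        exact eLpNorm_fderiv_le_of_fourier_eq_zero hf
    _ = (ENNReal.ofReal √(4 * π * B) * eLpNorm f 2 volume) ^ 2 := by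
        rw [mul_pow, ← ENNReal.ofReal_pow (Real.sqrt_nonneg _), Real.sq_sqrt (by positivity),
          show 4 * π * B = 2 * (2 * π * B) by ring, ENNReal.ofReal_mul zero_le_two,
          ENNReal.ofReal_ofNat]
        ring

end Bernstein

section FrequencyCutoff

open Module SchwartzMap Filter Topology

variable {E F : Type*} [NormedAddCommGroup E] [InnerProductSpace ℝ E] [FiniteDimensional ℝ E]

/-- A smooth frequency cutoff with values in `[0, 1]`, equal to `1` on `‖ξ‖ ≤ A` and to `0` on
`2 * A ≤ ‖ξ‖`. It is obtained by scaling one fixed bump function and is meant for `0 < A`. -/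
noncomputable def freqCutoff (A : ℝ) (ξ : E) : ℝ :=
  (⟨1, 2, one_pos, one_lt_two⟩ : ContDiffBump (0 : E)) (A⁻¹ • ξ)

theorem freqCutoff_nonneg (A : ℝ) (ξ : E) : 0 ≤ freqCutoff A ξ :=
  ContDiffBump.nonneg _

theorem freqCutoff_le_one (A : ℝ) (ξ : E) : freqCutoff A ξ ≤ 1 :=
  ContDiffBump.le_one _

theorem freqCutoff_eq_one {A : ℝ} (hA : 0 < A) {ξ : E} (hξ : ‖ξ‖ ≤ A) : freqCutoff A ξ = 1 := by
  refine ContDiffBump.one_of_mem_closedBall _ ?_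
  rw [mem_closedBall_zero_iff, norm_smul, norm_inv, Real.norm_of_nonneg hA.le]
  exact inv_mul_le_one_of_le₀ hξ hA.le

theorem freqCutoff_eq_zero {A : ℝ} (hA : 0 < A) {ξ : E} (hξ : 2 * A ≤ ‖ξ‖) :
    freqCutoff A ξ = 0 := by
  refine ContDiffBump.zero_of_le_dist _ ?_
  rw [dist_zero_right, norm_smul, norm_inv, Real.norm_of_nonneg hA.le]
  exact (le_inv_mul_iff₀' hA).2 hξ

theorem freqCutoff_hasTemperateGrowth (A : ℝ) :
    (freqCutoff A : E → ℝ).HasTemperateGrowth := by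
  let b : ContDiffBump (0 : E) := ⟨1, 2, one_pos, one_lt_two⟩
  exact (b.hasCompactSupport.toSchwartzMap b.contDiff).hasTemperateGrowth.comp
    (A⁻¹ • ContinuousLinearMap.id ℝ E).hasTemperateGrowth

theorem abs_freqCutoff_sub_half_le {a : ℝ} (ha : 0 < a) {s : ℝ} (hs : 0 ≤ s) (ξ : E) :
    |freqCutoff a ξ - freqCutoff (a / 2) ξ| ≤ (a / 2) ^ (-s) * ‖ξ‖ ^ s := by
  rcases le_or_gt ‖ξ‖ (a / 2) with hξ | hξ
  · rw [freqCutoff_eq_one ha (by linarith), freqCutoff_eq_one (half_pos ha) hξ, sub_self, abs_zero]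
    positivity
  · calc |freqCutoff a ξ - freqCutoff (a / 2) ξ| ≤ 1 :=
          abs_sub_le_of_nonneg_of_le (freqCutoff_nonneg _ _) (freqCutoff_le_one _ _)
            (freqCutoff_nonneg _ _) (freqCutoff_le_one _ _)
      _ ≤ (a / 2) ^ (-s) * ‖ξ‖ ^ s := by
          rw [Real.rpow_neg (half_pos ha).le]
          exact (one_le_inv_mul₀ (by positivity)).2 (by gcongr)

variable [MeasurableSpace E] [BorelSpace E] [NormedAddCommGroup F] [InnerProductSpace ℂ F]

/-- The smooth projection to frequencies `‖ξ‖ ≲ A`, that is the Fourier multiplier with symbol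
`freqCutoff A`. -/
noncomputable def lowPass (A : ℝ) : 𝓢(E, F) →L[ℝ] 𝓢(E, F) :=
  fourierMultiplierCLM F (freqCutoff A)

/-- The homogeneous Sobolev norm `‖|D|^s f‖_{L²}`, computed on the Fourier side. -/
noncomputable def homSobolevNorm (s : ℝ) (f : E → F) : ℝ≥0∞ :=
  eLpNorm (fun ξ => ‖ξ‖ ^ s * ‖𝓕 f ξ‖) 2 volume

theorem fourier_sub_apply (f g : 𝓢(E, F)) (ξ : E) : 𝓕 (f - g) ξ = 𝓕 f ξ - 𝓕 g ξ :=
  DFunLike.congr_fun (map_sub (FourierTransform.fourierCLM ℂ 𝓢(E, F)) f g) ξ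

variable [CompleteSpace F]

theorem fourier_lowPass_apply (A : ℝ) (V : 𝓢(E, F)) (ξ : E) :
    𝓕 (lowPass A V) ξ = freqCutoff A ξ • 𝓕 V ξ := by
  rw [lowPass, fourierMultiplierCLM_apply, FourierTransform.fourier_fourierInv_eq,
    smulLeftCLM_apply_apply (freqCutoff_hasTemperateGrowth A)]

theorem eLpNorm_sub_lowPass_sq_le {A : ℝ} (hA : 0 < A) (V : 𝓢(E, F)) :
    eLpNorm (V - lowPass A V) 2 volume ^ 2 ≤ ∫⁻ ξ in {ξ | A ≤ ‖ξ‖}, ‖𝓕 V ξ‖ₑ ^ 2 := by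
  rw [← eLpNorm_two_fourier, eLpNorm_two_sq,
    ← lintegral_indicator (measurableSet_le measurable_const measurable_norm)]
  refine lintegral_mono fun ξ => ?_
  have hsymbol : 𝓕 (V - lowPass A V) ξ = (1 - freqCutoff A ξ) • 𝓕 V ξ := by
    rw [fourier_sub_apply, fourier_lowPass_apply, sub_smul, one_smul]
  by_cases hξ : A ≤ ‖ξ‖
  · rw [Set.indicator_of_mem (by exact hξ), hsymbol, enorm_smul]
    gcongr
    refine mul_le_of_le_one_left zero_le ?_
    rw [Real.enorm_of_nonneg (sub_nonneg.2 (freqCutoff_le_one A ξ))]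
    exact ENNReal.ofReal_le_one.2 (sub_le_self _ (freqCutoff_nonneg A ξ))
  · rw [hsymbol, freqCutoff_eq_one hA (le_of_not_ge hξ), sub_self, zero_smul, enorm_zero,
      zero_pow two_ne_zero]
    exact zero_le

theorem eLpNorm_lowPass_le (A : ℝ) (V : 𝓢(E, F)) :
    eLpNorm (lowPass A V) 2 volume ≤ eLpNorm V 2 volume := by
  rw [← eLpNorm_two_fourier (lowPass A V), ← eLpNorm_two_fourier V]
  refine eLpNorm_mono fun ξ => ?_
  rw [fourier_lowPass_apply, norm_smul, Real.norm_of_nonneg (freqCutoff_nonneg A ξ)]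
  exact mul_le_of_le_one_left (norm_nonneg _) (freqCutoff_le_one A ξ)

theorem eLpNorm_lowPass_sub_lowPass_half_le {a : ℝ} (ha : 0 < a) {s : ℝ} (hs : 0 ≤ s)
    (V : 𝓢(E, F)) :
    eLpNorm (lowPass a V - lowPass (a / 2) V) 2 volume ≤
      ENNReal.ofReal ((a / 2) ^ (-s)) * homSobolevNorm s V := by
  rw [← eLpNorm_two_fourier]
  refine eLpNorm_le_mul_eLpNorm_of_ae_le_mul (.of_forall fun ξ => ?_) 2
  rw [fourier_sub_apply, fourier_lowPass_apply, fourier_lowPass_apply, ← sub_smul, norm_smul,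
    Real.norm_eq_abs, norm_mul, norm_norm, Real.norm_of_nonneg (by positivity), ← mul_assoc,
    fourier_coe]
  gcongr
  exact abs_freqCutoff_sub_half_le ha hs ξ

variable [Nontrivial E]

theorem radialProfile_lowPass_sub_lowPass_half_le {a : ℝ} (ha : 0 < a) {s : ℝ} (hs : 0 ≤ s)
    (V : 𝓢(E, F)) {r : ℝ} (hr : 0 < r) :
    radialProfile (lowPass a V - lowPass (a / 2) V) r ≤
      ENNReal.ofReal (√(8 * π) * 2 ^ s * a ^ (1 / 2 - s)) * homSobolevNorm s V := by
  have hband (ξ : E) (hξ : 2 * a < ‖ξ‖) : 𝓕 (lowPass a V - lowPass (a / 2) V) ξ = 0 := by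
    rw [fourier_sub_apply, fourier_lowPass_apply, fourier_lowPass_apply,
      freqCutoff_eq_zero ha hξ.le, freqCutoff_eq_zero (half_pos ha) (by linarith), sub_self]
  have hconst : √(4 * π * (2 * a)) * (a / 2) ^ (-s) = √(8 * π) * 2 ^ s * a ^ (1 / 2 - s) := by
    rw [show 4 * π * (2 * a) = 8 * π * a by ring, Real.sqrt_mul (by positivity),
      Real.div_rpow ha.le zero_le_two, Real.rpow_neg zero_le_two, div_inv_eq_mul, sub_eq_add_neg,
      Real.rpow_add ha, ← Real.sqrt_eq_rpow]
    ring
  calc radialProfile (lowPass a V - lowPass (a / 2) V) r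
      ≤ ENNReal.ofReal √(4 * π * (2 * a)) *
          eLpNorm (lowPass a V - lowPass (a / 2) V) 2 volume :=
        radialProfile_le_of_fourier_eq_zero (by positivity) hband hr
    _ ≤ ENNReal.ofReal √(4 * π * (2 * a)) *
          (ENNReal.ofReal ((a / 2) ^ (-s)) * homSobolevNorm s V) := by
        gcongr
        exact eLpNorm_lowPass_sub_lowPass_half_le ha hs V
    _ = _ := by rw [← mul_assoc, ← ENNReal.ofReal_mul (Real.sqrt_nonneg _), hconst]

theorem radialProfile_lowPass_le_eLpNorm {a : ℝ} (ha : 0 < a) (V : 𝓢(E, F)) {r : ℝ} (hr : 0 < r) :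
    radialProfile (lowPass a V) r ≤ ENNReal.ofReal √(8 * π * a) * eLpNorm V 2 volume := by
  have hband (ξ : E) (hξ : 2 * a < ‖ξ‖) : 𝓕 (lowPass a V) ξ = 0 := by
    rw [fourier_lowPass_apply, freqCutoff_eq_zero ha hξ.le, zero_smul]
  calc radialProfile (lowPass a V) r
      ≤ ENNReal.ofReal √(4 * π * (2 * a)) * eLpNorm (lowPass a V) 2 volume :=
        radialProfile_le_of_fourier_eq_zero (by positivity) hband hr
    _ ≤ ENNReal.ofReal √(8 * π * a) * eLpNorm V 2 volume := by
        rw [show 4 * π * (2 * a) = 8 * π * a by ring]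
        gcongr
        exact eLpNorm_lowPass_le a V

theorem tendsto_radialProfile_lowPass_zero (V : 𝓢(E, F)) {r : ℝ} (hr : 0 < r) :
    Tendsto (fun a => radialProfile (lowPass a V) r) (𝓝[>] 0) (𝓝 0) := by
  have hsqrt : Tendsto (fun a => √(8 * π * a)) (𝓝[>] 0) (𝓝 0) := by
    have hcont : Continuous fun a => √(8 * π * a) := by fun_prop
    simpa using (hcont.tendsto 0).mono_left nhdsWithin_le_nhds
  have hbound : Tendsto (fun a => ENNReal.ofReal √(8 * π * a) * eLpNorm V 2 volume) (𝓝[>] 0)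
      (𝓝 0) := by
    simpa using ENNReal.Tendsto.mul_const (ENNReal.tendsto_ofReal hsqrt)
      (.inr (V.eLpNorm_lt_top 2 volume).ne)
  exact tendsto_of_tendsto_of_tendsto_of_le_of_le' tendsto_const_nhds hbound
    (.of_forall fun _ => zero_le)
    (eventually_mem_nhdsWithin.mono fun a ha => radialProfile_lowPass_le_eLpNorm ha V hr)

end FrequencyCutoff

section DyadicSum

open SchwartzMap Filter Topology

theorem le_tsum_of_le_add_succ {u b : ℕ → ℝ≥0∞} (hstep : ∀ m, u m ≤ b m + u (m + 1))
    (hu : Tendsto u atTop (𝓝 0)) : u 0 ≤ ∑' m, b m := by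
  have hpartial (m : ℕ) : u 0 ≤ ∑ i ∈ Finset.range m, b i + u m := by
    induction m with
    | zero => simp
    | succ m ih =>
      rw [Finset.sum_range_succ, add_assoc]
      exact ih.trans (by gcongr; exact hstep m)
  have hlim := (ENNReal.tendsto_nat_tsum b).add hu
  rw [add_zero] at hlim
  exact ge_of_tendsto' hlim hpartial

/-- The constant in the bound of `lowPass` by the homogeneous Sobolev norm: the constant
`√(8π) 2^s` of a dyadic block times the geometric series of ratio `2^{-(1/2-s)}`. -/
noncomputable def lowPassConst (s : ℝ) : ℝ :=
  √(8 * π) * 2 ^ s * (1 - 2 ^ (-(1 / 2 - s)))⁻¹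

theorem two_rpow_neg_half_sub_lt_one {s : ℝ} (hs : s < 1 / 2) :
    (2 : ℝ) ^ (-(1 / 2 - s)) < 1 :=
  Real.rpow_lt_one_of_one_lt_of_neg one_lt_two (by linarith)

theorem lowPassConst_pos {s : ℝ} (hs : s < 1 / 2) : 0 < lowPassConst s :=
  mul_pos (by positivity) (inv_pos.2 (sub_pos.2 (two_rpow_neg_half_sub_lt_one hs)))

variable {E F : Type*} [NormedAddCommGroup E] [InnerProductSpace ℝ E] [FiniteDimensional ℝ E]
  [MeasurableSpace E] [BorelSpace E] [Nontrivial E] [NormedAddCommGroup F] [InnerProductSpace ℂ F]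
  [CompleteSpace F]

theorem radialProfile_lowPass_le {A : ℝ} (hA : 0 < A) {s : ℝ} (hs₀ : 0 ≤ s) (hs : s < 1 / 2)
    (V : 𝓢(E, F)) {r : ℝ} (hr : 0 < r) :
    radialProfile (lowPass A V) r ≤
      ENNReal.ofReal (lowPassConst s * A ^ (1 / 2 - s)) * homSobolevNorm s V := by
  set k := √(8 * π) * 2 ^ s
  set q : ℝ := 2 ^ (-(1 / 2 - s)) with hq
  have hq₀ : 0 ≤ q := by positivity
  have hscale (m : ℕ) : (A / 2 ^ m) ^ (1 / 2 - s) = A ^ (1 / 2 - s) * q ^ m := by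
    rw [Real.div_rpow hA.le (by positivity), hq, ← Real.rpow_mul_natCast zero_le_two,
      ← Real.rpow_natCast, ← Real.rpow_mul zero_le_two, neg_mul, Real.rpow_neg zero_le_two,
      mul_comm (m : ℝ), div_eq_mul_inv]
  have hstep (m : ℕ) : radialProfile (lowPass (A / 2 ^ m) V) r ≤
      ENNReal.ofReal (k * A ^ (1 / 2 - s)) * homSobolevNorm s V * ENNReal.ofReal q ^ m +
        radialProfile (lowPass (A / 2 ^ (m + 1)) V) r := by
    have hblock :=
      radialProfile_lowPass_sub_lowPass_half_le (by positivity : 0 < A / 2 ^ m) hs₀ V hr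
    rw [hscale, ← mul_assoc, ENNReal.ofReal_mul (by positivity), ENNReal.ofReal_pow hq₀,
      mul_right_comm] at hblock
    rw [pow_succ, ← div_div]
    exact (radialProfile_le_sub_add (lowPass (A / 2 ^ m) V).continuous
      (lowPass (A / 2 ^ m / 2) V).continuous r).trans (by gcongr; exact hblock)
  have hremainder : Tendsto (fun m : ℕ => radialProfile (lowPass (A / 2 ^ m) V) r) atTop (𝓝 0) :=
    (tendsto_radialProfile_lowPass_zero V hr).comp <| tendsto_nhdsWithin_iff.2
      ⟨tendsto_const_nhds.div_atTop (tendsto_pow_atTop_atTop_of_one_lt one_lt_two),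
        .of_forall fun m => by simp only [Set.mem_Ioi]; positivity⟩
  have hsum := le_tsum_of_le_add_succ hstep hremainder
  rw [ENNReal.tsum_mul_left, ENNReal.tsum_geometric, pow_zero, div_one] at hsum
  convert hsum using 1
  have hq₁ : 0 < 1 - q := sub_pos.2 (two_rpow_neg_half_sub_lt_one hs)
  rw [lowPassConst, mul_right_comm, ENNReal.ofReal_mul (by positivity), mul_right_comm,
    ENNReal.ofReal_inv_of_pos hq₁, ENNReal.ofReal_sub _ hq₀, ENNReal.ofReal_one]

end DyadicSum

section LayerCake

open Set

theorem lintegral_rpow_Ioc {a M : ℝ} (ha : -1 < a) (hM : 0 ≤ M) :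
    ∫⁻ t in Ioc 0 M, ENNReal.ofReal (t ^ a) = ENNReal.ofReal (M ^ (a + 1) / (a + 1)) := by
  rw [← ofReal_integral_eq_lintegral_ofReal, ← intervalIntegral.integral_of_le hM,
    integral_rpow (.inl ha), Real.zero_rpow (by linarith), sub_zero]
  · exact (intervalIntegrable_iff_integrableOn_Ioc_of_le hM).1
      (intervalIntegral.intervalIntegrable_rpow' ha)
  · exact ae_restrict_of_forall_mem measurableSet_Ioc fun t ht => Real.rpow_nonneg ht.1.le _

variable {α β : Type*} [MeasurableSpace α] [MeasurableSpace β] {μ : Measure α} {ν : Measure β}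
  [SFinite ν]

theorem lintegral_Ioi_rpow_mul_setLIntegral {a : ℝ} (ha : -1 < a) {M : β → ℝ}
    (hM : Measurable M) (hM₀ : ∀ y, 0 ≤ M y) {G : β → ℝ≥0∞} (hG : Measurable G) :
    ∫⁻ t in Ioi (0 : ℝ), ENNReal.ofReal (t ^ a) * ∫⁻ y in {y | t ≤ M y}, G y ∂ν =
      ∫⁻ y, ENNReal.ofReal (M y ^ (a + 1) / (a + 1)) * G y ∂ν := by
  let Φ : ℝ × β → ℝ≥0∞ :=
    {z | z.1 ≤ M z.2}.indicator fun z => ENNReal.ofReal (z.1 ^ a) * G z.2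
  have hΦ : Measurable Φ := .indicator (by fun_prop)
    (measurableSet_le measurable_fst (hM.comp measurable_snd))
  have hslice (t : ℝ) : ENNReal.ofReal (t ^ a) * ∫⁻ y in {y | t ≤ M y}, G y ∂ν =
      ∫⁻ y, Φ (t, y) ∂ν := by
    rw [← lintegral_const_mul _ hG, ← lintegral_indicator (measurableSet_le measurable_const hM)]
    rfl
  simp_rw [hslice]
  rw [lintegral_lintegral_swap (f := fun t y => Φ (t, y)) hΦ.aemeasurable]
  refine lintegral_congr fun y => ?_
  calc ∫⁻ t in Ioi (0 : ℝ), Φ (t, y)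
      = ∫⁻ t in Ioi (0 : ℝ), (Iic (M y)).indicator (fun t => ENNReal.ofReal (t ^ a) * G y) t := rfl
    _ = ∫⁻ t in Ioc 0 (M y), ENNReal.ofReal (t ^ a) * G y := by
      rw [lintegral_indicator measurableSet_Iic, Measure.restrict_restrict measurableSet_Iic,
        inter_comm, Ioi_inter_Iic]
    _ = ENNReal.ofReal (M y ^ (a + 1) / (a + 1)) * G y := by
      rw [lintegral_mul_const _ (by fun_prop), lintegral_rpow_Ioc ha (hM₀ y)]

theorem lintegral_rpow_eq_lintegral_meas_ofReal_lt_mul {g : α → ℝ≥0∞} (hg : AEMeasurable g μ)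
    (hg_top : ∀ᵐ x ∂μ, g x ≠ ⊤) {p : ℝ} (hp : 0 < p) :
    ∫⁻ x, g x ^ p ∂μ = ENNReal.ofReal p *
      ∫⁻ t in Ioi (0 : ℝ), μ {x | ENNReal.ofReal t < g x} * ENNReal.ofReal (t ^ (p - 1)) := by
  have htoReal : ∀ᵐ x ∂μ, g x ^ p = ENNReal.ofReal ((g x).toReal ^ p) := by
    filter_upwards [hg_top] with x hx
    rw [← ENNReal.ofReal_rpow_of_nonneg ENNReal.toReal_nonneg hp.le, ENNReal.ofReal_toReal hx]
  rw [lintegral_congr_ae htoReal, lintegral_rpow_eq_lintegral_meas_lt_mul _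
    (.of_forall fun _ => ENNReal.toReal_nonneg) hg.ennreal_toReal hp]
  congr 1
  refine setLIntegral_congr_fun measurableSet_Ioi fun t (ht : 0 < t) => ?_
  have hlevel : {x | t < (g x).toReal} =ᵐ[μ] {x | ENNReal.ofReal t < g x} := by
    filter_upwards [hg_top] with x hx
    exact propext (ENNReal.ofReal_lt_iff_lt_toReal ht.le hx).symm
  simp only [measure_congr hlevel]

theorem lintegral_rpow_le_of_meas_lt_le {g : α → ℝ≥0∞} (hg : AEMeasurable g μ)
    (hg_top : ∀ᵐ x ∂μ, g x ≠ ⊤) {p q : ℝ} (hp : 0 < p) (hqp : q < p) {M : β → ℝ}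
    (hM : Measurable M) (hM₀ : ∀ y, 0 ≤ M y) {G : β → ℝ≥0∞} (hG : Measurable G)
    (hlevel : ∀ t, 0 < t → μ {x | ENNReal.ofReal t < g x} ≤
      ENNReal.ofReal (t ^ (-q)) * ∫⁻ y in {y | t ≤ M y}, G y ∂ν) :
    ∫⁻ x, g x ^ p ∂μ ≤
      ENNReal.ofReal (p / (p - q)) * ∫⁻ y, ENNReal.ofReal (M y ^ (p - q)) * G y ∂ν := by
  have hlevel_mul : ∀ t ∈ Ioi (0 : ℝ),
      μ {x | ENNReal.ofReal t < g x} * ENNReal.ofReal (t ^ (p - 1)) ≤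
        ENNReal.ofReal (t ^ (p - q - 1)) * ∫⁻ y in {y | t ≤ M y}, G y ∂ν := by
    intro t (ht : 0 < t)
    refine (mul_le_mul_left (hlevel t ht) _).trans_eq ?_
    rw [mul_right_comm, ← ENNReal.ofReal_mul (by positivity), ← Real.rpow_add ht,
      show -q + (p - 1) = p - q - 1 by ring]
  calc ∫⁻ x, g x ^ p ∂μ
      ≤ ENNReal.ofReal p * ∫⁻ t in Ioi (0 : ℝ),
          ENNReal.ofReal (t ^ (p - q - 1)) * ∫⁻ y in {y | t ≤ M y}, G y ∂ν := by
        rw [lintegral_rpow_eq_lintegral_meas_ofReal_lt_mul hg hg_top hp]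
        gcongr ENNReal.ofReal p * ?_
        exact setLIntegral_mono' measurableSet_Ioi hlevel_mul
    _ = ENNReal.ofReal (p / (p - q)) * ∫⁻ y, ENNReal.ofReal (M y ^ (p - q)) * G y ∂ν := by
        rw [lintegral_Ioi_rpow_mul_setLIntegral (by linarith) hM hM₀ hG, sub_add_cancel,
          ← lintegral_const_mul' _ _ ENNReal.ofReal_ne_top,
          ← lintegral_const_mul' _ _ ENNReal.ofReal_ne_top]
        refine lintegral_congr fun y => ?_
        rw [← mul_assoc, ← mul_assoc, ← ENNReal.ofReal_mul hp.le,
          ← ENNReal.ofReal_mul (div_nonneg hp.le (sub_nonneg.2 hqp.le)), mul_div_assoc',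
          mul_comm_div, mul_div_assoc']

end LayerCake

section LevelSets

open SchwartzMap Set

variable {E F : Type*} [NormedAddCommGroup E] [InnerProductSpace ℝ E] [FiniteDimensional ℝ E]
  [MeasurableSpace E] [BorelSpace E] [Nontrivial E] [NormedAddCommGroup F]

theorem volume_lt_radialProfile_le {f g : E → F} (hf : Continuous f) (hg : Continuous g) {t : ℝ}
    (ht : 0 < t) (hgt : ∀ r, 0 < r → radialProfile g r ≤ ENNReal.ofReal (t / 2)) :
    volume.restrict (Ioi (0 : ℝ)) {r | ENNReal.ofReal t < radialProfile f r} ≤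
      ENNReal.ofReal (t ^ (-2 : ℝ)) * (4 * eLpNorm (f - g) 2 volume ^ 2) := by
  have hconst : (ENNReal.ofReal (t / 2) ^ 2)⁻¹ = ENNReal.ofReal (t ^ (-2 : ℝ)) * 4 := by
    rw [← ENNReal.ofReal_pow (by positivity), ← ENNReal.ofReal_inv_of_pos (by positivity),
      ← ENNReal.ofReal_ofNat, ← ENNReal.ofReal_mul (by positivity), Real.rpow_neg ht.le,
      Real.rpow_two]
    congr 1
    field_simp
    norm_num
  have hdiff : ∀ r ∈ Ioi (0 : ℝ), ENNReal.ofReal t < radialProfile f r →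
      ENNReal.ofReal (t / 2) ^ 2 ≤ radialProfile (f - g) r ^ 2 := by
    intro r hr hfr
    gcongr
    by_contra! hlt
    refine hfr.not_ge ((radialProfile_le_sub_add hf hg r).trans
      ((add_le_add hlt.le (hgt r hr)).trans_eq ?_))
    rw [← ENNReal.ofReal_add (by positivity) (by positivity), add_halves]
  calc volume.restrict (Ioi (0 : ℝ)) {r | ENNReal.ofReal t < radialProfile f r}
      ≤ volume.restrict (Ioi (0 : ℝ))
          {r | ENNReal.ofReal (t / 2) ^ 2 ≤ radialProfile (f - g) r ^ 2} :=
        measure_mono_ae (ae_restrict_of_forall_mem measurableSet_Ioi hdiff)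
    _ ≤ (∫⁻ r in Ioi (0 : ℝ), radialProfile (f - g) r ^ 2) / ENNReal.ofReal (t / 2) ^ 2 :=
        meas_ge_le_lintegral_div
          ((measurable_radialProfile (hf.sub hg)).pow_const 2).aemeasurable
          (by simpa using ht) (by simp)
    _ = ENNReal.ofReal (t ^ (-2 : ℝ)) * (4 * eLpNorm (f - g) 2 volume ^ 2) := by
        rw [lintegral_radialProfile_sq (hf.sub hg), div_eq_mul_inv, hconst, mul_comm, mul_assoc]

variable [InnerProductSpace ℂ F] [CompleteSpace F]

theorem volume_lt_radialProfile_le_of_homSobolevNorm_le {s : ℝ} (hs₀ : 0 ≤ s) (hs : s < 1 / 2)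
    (V : 𝓢(E, F)) {N : ℝ} (hN : 0 < N) (hVN : homSobolevNorm s V ≤ ENNReal.ofReal N) {t : ℝ}
    (ht : 0 < t) :
    volume.restrict (Ioi (0 : ℝ)) {r | ENNReal.ofReal t < radialProfile V r} ≤
      ENNReal.ofReal (t ^ (-2 : ℝ)) *
        ∫⁻ ξ in {ξ | t ≤ 2 * lowPassConst s * N * ‖ξ‖ ^ (1 / 2 - s)}, 4 * ‖𝓕 V ξ‖ₑ ^ 2 := by
  have hs' : 0 < 1 / 2 - s := sub_pos.2 hs
  have hK : 0 < lowPassConst s := lowPassConst_pos hs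
  -- The threshold solves `lowPassConst s * A ^ (1 / 2 - s) * N = t / 2`.
  set A : ℝ := (t / (2 * lowPassConst s * N)) ^ (1 / 2 - s)⁻¹
  have hA : 0 < A := by positivity
  have hA_rpow : A ^ (1 / 2 - s) = t / (2 * lowPassConst s * N) :=
    Real.rpow_inv_rpow (by positivity) hs'.ne'
  have hlow (r : ℝ) (hr : 0 < r) : radialProfile (lowPass A V) r ≤ ENNReal.ofReal (t / 2) :=
    calc radialProfile (lowPass A V) r
        ≤ ENNReal.ofReal (lowPassConst s * A ^ (1 / 2 - s)) * ENNReal.ofReal N :=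
          (radialProfile_lowPass_le hA hs₀ hs V hr).trans (by gcongr)
      _ = ENNReal.ofReal (t / 2) := by
          rw [← ENNReal.ofReal_mul (by positivity), hA_rpow]
          congr 1
          field_simp
  have hfreq : {ξ : E | A ≤ ‖ξ‖} ⊆ {ξ | t ≤ 2 * lowPassConst s * N * ‖ξ‖ ^ (1 / 2 - s)} := by
    intro ξ hξ
    have hpow := Real.rpow_le_rpow hA.le hξ hs'.le
    rwa [hA_rpow, div_le_iff₀' (by positivity)] at hpow
  refine (volume_lt_radialProfile_le V.continuous (lowPass A V).continuous ht hlow).trans ?_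
  rw [lintegral_const_mul' _ _ ofNat_ne_top]
  gcongr
  exact (eLpNorm_sub_lowPass_sq_le hA V).trans (lintegral_mono_set hfreq)

/-- The constant `((4p / (p - 2)) (2K)^{p-2})^{1/p}` of the weighted inequality, with
`K = lowPassConst (1/2 - 1/p)`. -/
noncomputable def weightedSobolevConst (p : ℝ) : ℝ :=
  (4 * p / (p - 2) * (2 * lowPassConst (1 / 2 - 1 / p)) ^ (p - 2)) ^ (1 / p)

theorem weightedSobolevConst_base_pos {p : ℝ} (hp : 2 < p) :
    0 < 4 * p / (p - 2) * (2 * lowPassConst (1 / 2 - 1 / p)) ^ (p - 2) := by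
  have hp₀ : 0 < p := by linarith
  have hK := lowPassConst_pos (sub_lt_self (1 / 2) (one_div_pos.2 hp₀))
  exact mul_pos (div_pos (by positivity) (sub_pos.2 hp)) (by positivity)

theorem weightedSobolevConst_pos {p : ℝ} (hp : 2 < p) : 0 < weightedSobolevConst p :=
  Real.rpow_pos_of_pos (weightedSobolevConst_base_pos hp) _

theorem weightedSobolevConst_mul_rpow {p : ℝ} (hp : 2 < p) {N : ℝ} (hN : 0 < N) :
    (weightedSobolevConst p * N) ^ p =
      p / (p - 2) * (4 * (2 * lowPassConst (1 / 2 - 1 / p) * N) ^ (p - 2) * N ^ 2) := by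
  have hp₀ : 0 < p := by linarith
  have hK := lowPassConst_pos (sub_lt_self (1 / 2) (one_div_pos.2 hp₀))
  have hN_rpow : N ^ p = N ^ (p - 2) * N ^ 2 := by
    rw [← Real.rpow_two, ← Real.rpow_add hN, sub_add_cancel]
  rw [Real.mul_rpow (weightedSobolevConst_pos hp).le hN.le, hN_rpow, weightedSobolevConst,
    ← Real.rpow_mul (weightedSobolevConst_base_pos hp).le, one_div_mul_cancel hp₀.ne',
    Real.rpow_one, Real.mul_rpow (by positivity) hN.le]
  ring

-- The `t`-integral of the layer cake turns `‖x‖ ^ (1 / p)` into `‖x‖ ^ ((p - 2) / p)`, which is the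
-- square of the symbol of `|D|^(1/2 - 1/p)`.
theorem ofReal_mul_norm_rpow_mul_enorm_sq {E F : Type*} [NormedAddCommGroup E]
    [NormedAddCommGroup F] {p c : ℝ} (hp : p ≠ 0) (hc : 0 ≤ c) (x : E) (y : F) :
    ENNReal.ofReal ((c * ‖x‖ ^ (1 / 2 - (1 / 2 - 1 / p))) ^ (p - 2)) * (4 * ‖y‖ₑ ^ 2) =
      ENNReal.ofReal (4 * c ^ (p - 2)) * ‖‖x‖ ^ (1 / 2 - 1 / p) * ‖y‖‖ₑ ^ 2 := by
  rw [enorm_mul, enorm_norm, mul_pow, Real.enorm_of_nonneg (by positivity),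
    ← ENNReal.ofReal_pow (by positivity), _root_.sub_sub_cancel, Real.mul_rpow hc (by positivity),
    ← Real.rpow_mul (norm_nonneg x), ← Real.rpow_mul_natCast (norm_nonneg x),
    show 1 / p * (p - 2) = (1 / 2 - 1 / p) * (2 : ℕ) by push_cast; field_simp,
    ← mul_assoc, ← mul_assoc, ← ENNReal.ofReal_ofNat, ← ENNReal.ofReal_mul (by positivity),
    ← ENNReal.ofReal_mul (by positivity)]
  congr 2
  ring

theorem lintegral_radialProfile_rpow_le {p : ℝ} (hp : 2 < p) (V : 𝓢(E, F)) {N : ℝ} (hN : 0 < N)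
    (hVN : homSobolevNorm (1 / 2 - 1 / p) V ≤ ENNReal.ofReal N) :
    ∫⁻ r in Ioi (0 : ℝ), radialProfile V r ^ p ≤
      ENNReal.ofReal ((weightedSobolevConst p * N) ^ p) := by
  have hp₀ : 0 < p := by linarith
  have hs₀ : 0 ≤ 1 / 2 - 1 / p := sub_nonneg.2 (one_div_le_one_div_of_le two_pos hp.le)
  have hs : 1 / 2 - 1 / p < 1 / 2 := sub_lt_self _ (by positivity)
  have hK : 0 < lowPassConst (1 / 2 - 1 / p) := lowPassConst_pos hs
  have hlayer := lintegral_rpow_le_of_meas_lt_le (ν := (volume : Measure E))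
    (measurable_radialProfile V.continuous).aemeasurable
    (.of_forall (radialProfile_ne_top V.continuous)) hp₀ hp (by fun_prop)
    (fun ξ => by positivity) (((𝓕 V).continuous.enorm.measurable.pow_const 2).const_mul 4)
    fun t ht => volume_lt_radialProfile_le_of_homSobolevNorm_le hs₀ hs V hN hVN ht
  have hsobolev : ∫⁻ ξ : E, ‖‖ξ‖ ^ (1 / 2 - 1 / p) * ‖𝓕 V ξ‖‖ₑ ^ 2 ≤ ENNReal.ofReal (N ^ 2) := by
    rw [← eLpNorm_two_sq, ENNReal.ofReal_pow hN.le]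
    gcongr
    exact hVN
  have hc : 0 ≤ 2 * lowPassConst (1 / 2 - 1 / p) * N := by positivity
  simp_rw [ofReal_mul_norm_rpow_mul_enorm_sq hp₀.ne' hc] at hlayer
  rw [lintegral_const_mul' _ _ ENNReal.ofReal_ne_top] at hlayer
  rw [weightedSobolevConst_mul_rpow hp hN,
    ENNReal.ofReal_mul (div_nonneg hp₀.le (sub_nonneg.2 hp.le)), ENNReal.ofReal_mul (by positivity)]
  exact hlayer.trans (by gcongr)

end LevelSets

section WeightedSobolev

open Module SchwartzMap

theorem weighted_sobolev_general {E F : Type*} [NormedAddCommGroup E] [InnerProductSpace ℝ E]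
    [FiniteDimensional ℝ E] [MeasurableSpace E] [BorelSpace E] [Nontrivial E]
    [NormedAddCommGroup F] [InnerProductSpace ℂ F] [CompleteSpace F] {p : ℝ} (hp : 2 < p)
    (V : 𝓢(E, F)) :
    mixedNorm p 2 (fun x => ‖x‖ ^ (((finrank ℝ E : ℝ) - 1) * (1 / 2 - 1 / p)) • V x) ≤
      ENNReal.ofReal (weightedSobolevConst p) * homSobolevNorm (1 / 2 - 1 / p) V := by
  have hp₀ : 0 < p := by linarith
  have hC := weightedSobolevConst_pos hp
  have hC₀ : ENNReal.ofReal (weightedSobolevConst p) ≠ 0 := (ENNReal.ofReal_pos.2 hC).ne'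
  rw [mixedNorm_two_weight_smul hp₀, ← ENNReal.div_le_iff' hC₀ ENNReal.ofReal_ne_top]
  -- The distributional estimate needs a positive finite bound `N` of the Sobolev norm, so the norm
  -- is approached from above.
  refine le_of_forall_gt_imp_ge_of_dense fun N hN => ?_
  rcases eq_or_ne N ⊤ with rfl | hN_top
  · exact le_top
  have hN₀ : 0 < N.toReal := ENNReal.toReal_pos (zero_le.trans_lt hN).ne' hN_top
  have hbound := lintegral_radialProfile_rpow_le hp V hN₀
    (hN.le.trans_eq (ENNReal.ofReal_toReal hN_top).symm)
  rw [ENNReal.div_le_iff' hC₀ ENNReal.ofReal_ne_top]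
  calc (∫⁻ r in Set.Ioi (0 : ℝ), radialProfile V r ^ p) ^ (1 / p)
      ≤ ENNReal.ofReal (weightedSobolevConst p * N.toReal) := by
        refine (ENNReal.rpow_le_rpow hbound (by positivity)).trans_eq ?_
        rw [ENNReal.ofReal_rpow_of_nonneg (by positivity) (by positivity),
          ← Real.rpow_mul (by positivity), mul_one_div_cancel hp₀.ne', Real.rpow_one]
    _ = ENNReal.ofReal (weightedSobolevConst p) * N := by
        rw [ENNReal.ofReal_mul hC.le, ENNReal.ofReal_toReal hN_top]

theorem sphN_two_eq_eLpNorm (n : ℕ) (g : Spc n → ℝ) (r : ℝ) :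
    sphN n 2 g r = eLpNorm (fun o : Metric.sphere (0 : Spc n) 1 => g (r • (o : Spc n))) 2
      (volume : Measure (Spc n)).toSphere := by
  rw [eLpNorm_eq_lintegral_rpow_enorm_toReal two_ne_zero ofNat_ne_top, ENNReal.toReal_ofNat]
  rfl

theorem mixN_two_weight_mul_eq_mixedNorm (n : ℕ) (p w : ℝ) (v : Spc n → ℝ) :
    mixN n p 2 (fun x => ‖x‖ ^ w * v x) = mixedNorm p 2 (fun x => ‖x‖ ^ w • (v x : ℂ)) := by
  have hnorm (x : Spc n) : ‖‖x‖ ^ w • (v x : ℂ)‖ = ‖‖x‖ ^ w * v x‖ := by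
    rw [norm_smul, norm_mul, Complex.norm_real]
  rw [mixedNorm_congr_norm hnorm]
  simp only [mixN, mixedNorm, sphN_two_eq_eLpNorm, finrank_euclideanSpace_fin]

end WeightedSobolev

/-- The Li–Zhou weighted Sobolev-type inequality (Lemma 3.3). -/
theorem weighted_sobolev (n : ℕ) (hn : 2 ≤ n) (p : ℝ) (hp : 2 < p) :
    ∃ C > (0 : ℝ), ∀ v : Spc n → ℝ, ContDiff ℝ ∞ v → HasCompactSupport v →
      mixN n p 2 (fun x => ‖x‖ ^ (((n : ℝ) - 1) * (1/2 - 1/p)) * v x) ≤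
        ENNReal.ofReal C * DsN (1/2 - 1/p) v := by
  have : NeZero n := ⟨by omega⟩
  refine ⟨weightedSobolevConst p, weightedSobolevConst_pos hp, fun v hv hv_supp => ?_⟩
  let V : SchwartzMap (Spc n) ℂ :=
    (hv_supp.comp_left Complex.ofReal_zero).toSchwartzMap (Complex.ofRealCLM.contDiff.comp hv)
  have hV := weighted_sobolev_general hp V
  rw [finrank_euclideanSpace_fin] at hV
  exact (mixN_two_weight_mul_eq_mixedNorm n p _ v).trans_le hV
end

section
/- There exists a constant C > 0 such that for every v ∈ C_c^∞(ℝ³) and every r > 0, r^{1/2} ‖v(rω)‖_{L⁴(S², dS_ω)} ≤ C ‖∇v‖_{L²(ℝ³)}. -/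
open MeasureTheory Real ENNReal FourierTransform
open scoped ContDiff

/-!
Since `v` has compact support, integrating the radial derivative of `‖v‖ ^ q` outwards from `r • θ`
gives `‖v (r • θ)‖ ^ q ≤ q ∫_r^∞ ‖v (s • θ)‖ ^ (q - 1) ‖∇v (s • θ)‖ ds`. Multiplying by
`r ^ (n - 1) ≤ s ^ (n - 1)` and integrating over the sphere turns the right side into an integral
over the exterior of a ball in polar coordinates, so
`r ^ (n - 1) ∫ ‖v (r • θ)‖ ^ q dθ ≤ q ∫ ‖v‖ ^ (q - 1) ‖∇v‖ dx`. By Hölder this is at most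
`q ‖v‖_s ^ (q - 1) ‖∇v‖_p`. For `q = p (n - 1) / (n - p)`, that is `(n - 1) / q = n / p - 1`, the
exponent `s` is the Sobolev exponent of `p`, and the Gagliardo–Nirenberg–Sobolev inequality bounds
`‖v‖_s` by `‖∇v‖_p`.
-/

section

open Module Metric Set
open scoped NNReal

variable {E F : Type*} [NormedAddCommGroup E] [NormedSpace ℝ E] [NormedAddCommGroup F]

section Radial

theorem hasCompactSupport_comp_smul_right {v : E → F} (hvc : HasCompactSupport v) {x : E}
    (hx : x ≠ 0) : HasCompactSupport fun s : ℝ ↦ v (s • x) :=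
  hvc.comp_isClosedEmbedding (isClosedEmbedding_smul_left hx)

theorem enorm_deriv_eq_enorm_fderiv [NormedSpace ℝ F] (f : ℝ → F) (s : ℝ) :
    ‖deriv f s‖ₑ = ‖fderiv ℝ f s‖ₑ := by
  rw [← ofReal_norm, ← ofReal_norm, norm_deriv_eq_norm_fderiv]

theorem enorm_deriv_comp_smul_right_le [NormedSpace ℝ F] {v : E → F} {x : E} {s : ℝ}
    (hv : DifferentiableAt ℝ v (s • x)) :
    ‖deriv (fun s : ℝ ↦ v (s • x)) s‖ₑ ≤ ‖fderiv ℝ v (s • x)‖ₑ * ‖x‖ₑ := by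
  have hray : HasDerivAt (fun s : ℝ ↦ s • x) x s := by
    simpa only [id_eq, one_smul] using (hasDerivAt_id s).smul_const x
  have hvx : HasDerivAt (fun s : ℝ ↦ v (s • x)) (fderiv ℝ v (s • x) x) s :=
    hv.hasFDerivAt.comp_hasDerivAt s hray
  rw [hvx.deriv]
  exact (fderiv ℝ v (s • x)).le_opENorm x

theorem enorm_le_lintegral_Ioi_enorm_deriv [NormedSpace ℝ F] [CompleteSpace F] {f : ℝ → F}
    (hf : ContDiff ℝ 1 f) (hfc : HasCompactSupport f) (r : ℝ) :
    ‖f r‖ₑ ≤ ∫⁻ s in Ioi r, ‖deriv f s‖ₑ := by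
  rw [← enorm_neg, ← hfc.integral_Ioi_deriv_eq hf r]
  exact enorm_integral_le_lintegral_enorm _

variable [InnerProductSpace ℝ F] {q : ℝ≥0}

theorem enorm_rpow_le_lintegral_Ioi_enorm_deriv {f : ℝ → F} (hf : ContDiff ℝ 1 f)
    (hfc : HasCompactSupport f) (hq : 1 < q) (r : ℝ) :
    ‖f r‖ₑ ^ (q : ℝ) ≤ ∫⁻ s in Ioi r, q * (‖f s‖ₑ ^ ((q : ℝ) - 1) * ‖deriv f s‖ₑ) := by
  have hq0 : (q : ℝ) ≠ 0 := by positivity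
  have hfqc : HasCompactSupport fun s ↦ ‖f s‖ ^ (q : ℝ) :=
    hfc.comp_left (g := fun y : F ↦ ‖y‖ ^ (q : ℝ)) (by simp [hq0])
  calc ‖f r‖ₑ ^ (q : ℝ)
      = ‖‖f r‖ ^ (q : ℝ)‖ₑ := by
        rw [Real.enorm_rpow_of_nonneg (norm_nonneg _) q.coe_nonneg, enorm_norm]
    _ ≤ ∫⁻ s in Ioi r, ‖deriv (fun s ↦ ‖f s‖ ^ (q : ℝ)) s‖ₑ :=
        enorm_le_lintegral_Ioi_enorm_deriv (hf.norm_rpow (mod_cast hq)) hfqc r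
    _ ≤ ∫⁻ s in Ioi r, q * (‖f s‖ₑ ^ ((q : ℝ) - 1) * ‖deriv f s‖ₑ) := by
        refine lintegral_mono fun s ↦ ?_
        simpa only [enorm_deriv_eq_enorm_fderiv, mul_assoc] using
          enorm_fderiv_norm_rpow_le (hf.differentiable one_ne_zero) hq

theorem enorm_rpow_le_lintegral_Ioi_enorm_fderiv {v : E → F} (hv : ContDiff ℝ 1 v)
    (hvc : HasCompactSupport v) (hq : 1 < q) (θ : sphere (0 : E) 1) (r : ℝ) :
    ‖v (r • (θ : E))‖ₑ ^ (q : ℝ) ≤ ∫⁻ s in Ioi r,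
      q * (‖v (s • (θ : E))‖ₑ ^ ((q : ℝ) - 1) * ‖fderiv ℝ v (s • (θ : E))‖ₑ) := by
  have hθ : ‖(θ : E)‖ₑ = 1 := by simp [← ofReal_norm]
  have hray : ContDiff ℝ 1 fun s : ℝ ↦ v (s • (θ : E)) := hv.comp (by fun_prop)
  refine (enorm_rpow_le_lintegral_Ioi_enorm_deriv hray
    (hasCompactSupport_comp_smul_right hvc (ne_zero_of_mem_unit_sphere θ)) hq r).trans
      (lintegral_mono fun s ↦ ?_)
  have hderiv := enorm_deriv_comp_smul_right_le (hv.differentiable one_ne_zero (s • (θ : E)))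
  rw [hθ, mul_one] at hderiv
  gcongr

end Radial

variable [MeasurableSpace E] [BorelSpace E]

theorem lintegral_eq_lintegral_sphere_lintegral_Ioi [FiniteDimensional ℝ E] [Nontrivial E]
    (μ : Measure E) [μ.IsAddHaarMeasure] {f : E → ℝ≥0∞} (hf : Measurable f) :
    ∫⁻ x, f x ∂μ = ∫⁻ θ, (∫⁻ s in Ioi (0 : ℝ),
      ENNReal.ofReal (s ^ (finrank ℝ E - 1)) * f (s • (θ : E))) ∂μ.toSphere := by
  let polar : sphere (0 : E) 1 × Ioi (0 : ℝ) → ℝ≥0∞ := fun p ↦ f ((p.2 : ℝ) • (p.1 : E))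
  have hpolar : Measurable polar := by fun_prop
  calc ∫⁻ x, f x ∂μ
      = ∫⁻ x : ({0}ᶜ : Set E), f x ∂μ.comap Subtype.val := by
        rw [lintegral_subtype_comap (measurableSet_singleton _).compl, restrict_compl_singleton]
    _ = ∫⁻ x, polar (homeomorphUnitSphereProd E x) ∂μ.comap Subtype.val := by
        refine lintegral_congr fun x ↦ ?_
        simp [polar, smul_smul, norm_ne_zero_iff.2 x.2]
    _ = ∫⁻ p, polar p ∂μ.toSphere.prod (.volumeIoiPow (finrank ℝ E - 1)) :=
        μ.measurePreserving_homeomorphUnitSphereProd.lintegral_comp hpolar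
    _ = ∫⁻ θ, (∫⁻ s, polar (θ, s) ∂.volumeIoiPow (finrank ℝ E - 1)) ∂μ.toSphere :=
        lintegral_prod _ hpolar.aemeasurable
    _ = _ := by
        refine lintegral_congr fun θ ↦ ?_
        rw [Measure.volumeIoiPow,
          lintegral_withDensity_eq_lintegral_mul _ (by fun_prop) (by fun_prop)]
        exact lintegral_subtype_comap measurableSet_Ioi
          fun s : ℝ ↦ ENNReal.ofReal (s ^ (finrank ℝ E - 1)) * f (s • (θ : E))

theorem lintegral_enorm_rpow_mul_enorm_le {α G : Type*} [MeasurableSpace α] {μ : Measure α}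
    [NormedAddCommGroup G] {f : α → F} {g : α → G} {a : ℝ} {s p : ℝ≥0}
    (h : ((s : ℝ) / a).HolderConjugate p) (hf : AEStronglyMeasurable f μ)
    (hg : AEStronglyMeasurable g μ) :
    ∫⁻ x, ‖f x‖ₑ ^ a * ‖g x‖ₑ ∂μ ≤ eLpNorm f s μ ^ a * eLpNorm g p μ := by
  have hs : s ≠ 0 := by rintro rfl; simpa using h.pos
  have hp : p ≠ 0 := mod_cast h.symm.ne_zero
  have ha : a ≠ 0 := by rintro rfl; simpa using h.pos
  calc ∫⁻ x, ‖f x‖ₑ ^ a * ‖g x‖ₑ ∂μ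
      ≤ (∫⁻ x, (‖f x‖ₑ ^ a) ^ ((s : ℝ) / a) ∂μ) ^ (1 / ((s : ℝ) / a)) *
          (∫⁻ x, ‖g x‖ₑ ^ (p : ℝ) ∂μ) ^ (1 / (p : ℝ)) :=
        ENNReal.lintegral_mul_le_Lp_mul_Lq μ h (hf.enorm.pow_const a) hg.enorm
    _ = eLpNorm f s μ ^ a * eLpNorm g p μ := by
        rw [eLpNorm_nnreal_eq_lintegral hs, eLpNorm_nnreal_eq_lintegral hp, ← ENNReal.rpow_mul]
        simp only [← ENNReal.rpow_mul, mul_div_cancel₀ _ ha, one_div_div, one_div_mul_eq_div]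

section Exponents

variable {n p q : ℝ}

theorem one_lt_of_sub_one_div_eq (hp : 1 < p) (hpn : p < n) (hpq : (n - 1) / q = n / p - 1) :
    1 < q := by
  have hn : 0 < n - 1 := by linarith
  have hpos : 0 < (n - 1) / q := by
    rw [hpq, sub_pos, one_lt_div (by positivity)]
    exact hpn
  have hlt : (n - 1) / q < n - 1 := by
    rw [hpq]
    linarith [div_lt_self (by linarith : 0 < n) hp]
  rwa [div_lt_iff₀ ((div_pos_iff_of_pos_left hn).1 hpos), lt_mul_iff_one_lt_right hn] at hlt

theorem holderConjugate_div_sub_one {s : ℝ} (hp : 1 < p) (hpn : p < n)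
    (hpq : (n - 1) / q = n / p - 1) (hs : s⁻¹ = p⁻¹ - n⁻¹) :
    (s / (q - 1)).HolderConjugate p := by
  have hq : 1 < q := one_lt_of_sub_one_div_eq hp hpn hpq
  have hq0 : q ≠ 0 := by positivity
  have hp0 : p ≠ 0 := by positivity
  have hn0 : n ≠ 0 := by linarith
  refine (Real.holderConjugate_iff.2 ⟨hp, ?_⟩).symm
  rw [inv_div, div_eq_mul_inv, hs]
  field_simp at hpq ⊢
  linarith

end Exponents

section Trace

variable [FiniteDimensional ℝ E] [InnerProductSpace ℝ F] (μ : Measure E) [μ.IsAddHaarMeasure]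
  {v : E → F} {p q : ℝ≥0}

theorem ofReal_pow_mul_lintegral_sphere_enorm_rpow_le [Nontrivial E] (hv : ContDiff ℝ 1 v)
    (hvc : HasCompactSupport v) (hq : 1 < q) {r : ℝ} (hr : 0 ≤ r) :
    ENNReal.ofReal (r ^ (finrank ℝ E - 1)) *
        ∫⁻ θ, ‖v (r • (θ : E))‖ₑ ^ (q : ℝ) ∂μ.toSphere ≤
      q * ∫⁻ x, ‖v x‖ₑ ^ ((q : ℝ) - 1) * ‖fderiv ℝ v x‖ₑ ∂μ := by
  let w : E → ℝ≥0∞ := fun x ↦ q * (‖v x‖ₑ ^ ((q : ℝ) - 1) * ‖fderiv ℝ v x‖ₑ)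
  have hw : Measurable w :=
    ((hv.continuous.enorm.measurable.pow_const _).mul
      (hv.continuous_fderiv one_ne_zero).enorm.measurable).const_mul _
  have hray (θ : sphere (0 : E) 1) :
      ENNReal.ofReal (r ^ (finrank ℝ E - 1)) * ‖v (r • (θ : E))‖ₑ ^ (q : ℝ) ≤
        ∫⁻ s in Ioi (0 : ℝ), ENNReal.ofReal (s ^ (finrank ℝ E - 1)) * w (s • (θ : E)) := calc
    _ ≤ ENNReal.ofReal (r ^ (finrank ℝ E - 1)) * ∫⁻ s in Ioi r, w (s • (θ : E)) := by
      gcongr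
      exact enorm_rpow_le_lintegral_Ioi_enorm_fderiv hv hvc hq θ r
    _ = ∫⁻ s in Ioi r, ENNReal.ofReal (r ^ (finrank ℝ E - 1)) * w (s • (θ : E)) :=
      (lintegral_const_mul' _ _ ENNReal.ofReal_ne_top).symm
    _ ≤ ∫⁻ s in Ioi r, ENNReal.ofReal (s ^ (finrank ℝ E - 1)) * w (s • (θ : E)) := by
      refine setLIntegral_mono' measurableSet_Ioi fun s (hs : r < s) ↦ ?_
      gcongr
    _ ≤ _ := lintegral_mono_set (Ioi_subset_Ioi hr)
  rw [← lintegral_const_mul' _ _ ENNReal.ofReal_ne_top,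
    ← lintegral_const_mul' _ _ ENNReal.coe_ne_top,
    lintegral_eq_lintegral_sphere_lintegral_Ioi μ hw]
  exact lintegral_mono hray

theorem lintegral_enorm_rpow_sub_one_mul_enorm_fderiv_le (hv : ContDiff ℝ 1 v)
    (hvc : HasCompactSupport v) (hp : 1 < p) (hpn : p < finrank ℝ E)
    (hpq : (finrank ℝ E - 1 : ℝ) / q = finrank ℝ E / p - 1) :
    ∫⁻ x, ‖v x‖ₑ ^ ((q : ℝ) - 1) * ‖fderiv ℝ v x‖ₑ ∂μ ≤
      (eLpNormLESNormFDerivOfEqInnerConst μ p : ℝ≥0∞) ^ ((q : ℝ) - 1) *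
        eLpNorm (fderiv ℝ v) p μ ^ (q : ℝ) := by
  have hp' : 1 < (p : ℝ) := mod_cast hp
  have hpn' : (p : ℝ) < finrank ℝ E := mod_cast hpn
  have hq : 1 < (q : ℝ) := one_lt_of_sub_one_div_eq hp' hpn' hpq
  obtain ⟨s, hs⟩ : ∃ s : ℝ≥0, (s : ℝ)⁻¹ = (p : ℝ)⁻¹ - (finrank ℝ E : ℝ)⁻¹ :=
    ⟨⟨((p : ℝ)⁻¹ - (finrank ℝ E : ℝ)⁻¹)⁻¹,
      inv_nonneg.2 (sub_nonneg.2 (inv_anti₀ (by positivity) hpn'.le))⟩, inv_inv _⟩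
  have hsobolev : eLpNorm v s μ ≤
      eLpNormLESNormFDerivOfEqInnerConst μ p * eLpNorm (fderiv ℝ v) p μ :=
    eLpNorm_le_eLpNorm_fderiv_of_eq_inner μ hv hvc hp.le
      (Nat.cast_pos.1 (zero_lt_one.trans (hp.trans hpn))) hs
  calc _ ≤ eLpNorm v s μ ^ ((q : ℝ) - 1) * eLpNorm (fderiv ℝ v) p μ :=
        lintegral_enorm_rpow_mul_enorm_le (holderConjugate_div_sub_one hp' hpn' hpq hs)
          hv.continuous.aestronglyMeasurable
          (hv.continuous_fderiv one_ne_zero).aestronglyMeasurable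
    _ ≤ (eLpNormLESNormFDerivOfEqInnerConst μ p * eLpNorm (fderiv ℝ v) p μ) ^ ((q : ℝ) - 1) *
          eLpNorm (fderiv ℝ v) p μ := by gcongr
    _ = _ := by
        rw [ENNReal.mul_rpow_of_nonneg _ _ (by linarith), mul_assoc]
        congr 1
        nth_rw 2 [← ENNReal.rpow_one (eLpNorm (fderiv ℝ v) p μ)]
        rw [← ENNReal.rpow_add_of_nonneg _ _ (by linarith) zero_le_one, sub_add_cancel]

theorem ofReal_rpow_mul_eLpNorm_sphere_le (hv : ContDiff ℝ 1 v) (hvc : HasCompactSupport v)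
    (hp : 1 < p) (hpn : p < finrank ℝ E)
    (hpq : (finrank ℝ E - 1 : ℝ) / q = finrank ℝ E / p - 1) {r : ℝ} (hr : 0 ≤ r) :
    ENNReal.ofReal (r ^ (finrank ℝ E / p - 1 : ℝ)) *
        eLpNorm (fun θ : sphere (0 : E) 1 ↦ v (r • (θ : E))) q μ.toSphere ≤
      ((q * eLpNormLESNormFDerivOfEqInnerConst μ p ^ ((q : ℝ) - 1)) ^ (q : ℝ)⁻¹ : ℝ≥0) *
        eLpNorm (fderiv ℝ v) p μ := by
  have hq : 1 < q :=
    mod_cast one_lt_of_sub_one_div_eq (q := q) (mod_cast hp) (mod_cast hpn) hpq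
  have hq0 : (0 : ℝ) < q := by positivity
  have hn : 1 ≤ finrank ℝ E := Nat.one_le_cast.1 (hp.trans hpn).le
  have : Nontrivial E := nontrivial_of_finrank_pos hn
  have hweight : (r ^ (finrank ℝ E / p - 1 : ℝ)) ^ (q : ℝ) = r ^ (finrank ℝ E - 1) := by
    rw [← hpq, ← Real.rpow_mul hr, div_mul_cancel₀ _ hq0.ne', ← Nat.cast_pred hn,
      Real.rpow_natCast]
  rw [← ENNReal.rpow_le_rpow_iff hq0, ENNReal.mul_rpow_of_nonneg _ _ hq0.le,
    ENNReal.mul_rpow_of_nonneg _ _ hq0.le, ENNReal.ofReal_rpow_of_nonneg (by positivity) hq0.le,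
    hweight, eLpNorm_nnreal_pow_eq_lintegral (by positivity),
    ← ENNReal.coe_rpow_of_nonneg _ hq0.le, NNReal.rpow_inv_rpow hq0.ne', ENNReal.coe_mul,
    ENNReal.coe_rpow_of_nonneg _ (sub_nonneg.2 (mod_cast hq.le)), mul_assoc]
  refine (ofReal_pow_mul_lintegral_sphere_enorm_rpow_le μ hv hvc hq hr).trans ?_
  gcongr
  exact lintegral_enorm_rpow_sub_one_mul_enorm_fderiv_le μ hv hvc hp hpn hpq

variable (F) in
theorem trace_inequality_L4_general (hp : 1 < p) (hpn : p < finrank ℝ E)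
    (hpq : (finrank ℝ E - 1 : ℝ) / q = finrank ℝ E / p - 1) :
    ∃ C > (0 : ℝ), ∀ v : E → F, ContDiff ℝ 1 v → HasCompactSupport v → ∀ r : ℝ, 0 ≤ r →
      ENNReal.ofReal (r ^ (finrank ℝ E / p - 1 : ℝ)) *
          eLpNorm (fun θ : sphere (0 : E) 1 ↦ v (r • (θ : E))) q μ.toSphere ≤
        ENNReal.ofReal C * eLpNorm (fderiv ℝ v) p μ := by
  let C : ℝ≥0 := (q * eLpNormLESNormFDerivOfEqInnerConst μ p ^ ((q : ℝ) - 1)) ^ (q : ℝ)⁻¹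
  refine ⟨(C + 1 : ℝ≥0), by positivity, fun v hv hvc r hr ↦ ?_⟩
  refine (ofReal_rpow_mul_eLpNorm_sphere_le μ hv hvc hp hpn hpq hr).trans ?_
  rw [ENNReal.ofReal_coe_nnreal]
  gcongr
  exact le_add_of_nonneg_right zero_le_one

end Trace

theorem sphN_eq_eLpNorm {n : ℕ} {q : ℝ} (hq : 0 < q) (g : Spc n → ℝ) (r : ℝ) :
    sphN n q g r = eLpNorm (fun θ : sphere (0 : Spc n) 1 ↦ g (r • (θ : Spc n)))
      (ENNReal.ofReal q) (sphM n) := by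
  rw [eLpNorm_eq_lintegral_rpow_enorm_toReal (by simpa) ENNReal.ofReal_ne_top,
    ENNReal.toReal_ofReal hq.le]
  rfl

end

/-- The trace-type inequality (3.24) of Lemma 3.4 (i). -/
theorem trace_inequality_L4 :
    ∃ C > (0 : ℝ), ∀ v : Spc 3 → ℝ, ContDiff ℝ ∞ v → HasCompactSupport v →
      ∀ r : ℝ, 0 < r →
        ENNReal.ofReal (r ^ (1/2 : ℝ)) * sphN 3 4 v r ≤
          ENNReal.ofReal C * eLpNorm (fun x : Spc 3 => ‖fderiv ℝ v x‖) 2 volume := by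
  obtain ⟨C, hC, htrace⟩ := trace_inequality_L4_general (E := Spc 3) ℝ volume (p := 2) (q := 4)
    (by norm_num) (by norm_num) (by norm_num)
  exact ⟨C, hC, fun v hv hvc r hr ↦ by
    simpa [sphN_eq_eLpNorm, sphM, show (3 / 2 - 1 : ℝ) = 1 / 2 by norm_num] using
      htrace v (hv.of_le (mod_cast le_top)) hvc r hr.le⟩
end
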